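/- Let a ∈ ℝ and let g : ℂ → ℂ be analytic on an open set containing the closed vertical strip {z ∈ ℂ : a ≤ Re z ≤ a+1}. Suppose that the integrals over the horizontal segments vanish in the limit: lim_{T→+∞} ∫_{s=0}^{1} g(a+s+iT)·e^{−cos(2π(a+s+iT))} ds = 0 and lim_{T→+∞} ∫_{s=0}^{1} g(a+s−iT)·e^{−cos(2π(a+s−iT))} ds = 0. Then lim_{T→+∞} ∫_{−T}^{T} ( g(a+1+iy) − g(a+iy) )·e^{−cos(2π(a+iy))} dy = 0; equivalently, the principal-value integral of (g(x+1) − g(x))·e^{−cos(2πx)} along the vertical line Re x = a vanishes. -/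

import Mathlib

open Filter

/-- Lemma 2.11 (contour-shift identity): the Barnes-type residue map vanishes on
differences `g(x+1) - g(x)`. -/
theorem residue_vanishes_on_differences
    (a : ℝ) (U : Set ℂ) (hU : IsOpen U)
    (hstrip : {z : ℂ | a ≤ z.re ∧ z.re ≤ a + 1} ⊆ U)
    (g : ℂ → ℂ) (hg : DifferentiableOn ℂ g U)
    (htop : Tendsto (fun T : ℝ => ∫ s in (0:ℝ)..1,
        g ((a : ℂ) + s + Complex.I * T) *
          Complex.exp (-Complex.cos (2 * Real.pi * ((a : ℂ) + s + Complex.I * T))))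
      atTop (nhds 0))
    (hbot : Tendsto (fun T : ℝ => ∫ s in (0:ℝ)..1,
        g ((a : ℂ) + s - Complex.I * T) *
          Complex.exp (-Complex.cos (2 * Real.pi * ((a : ℂ) + s - Complex.I * T))))
      atTop (nhds 0)) :
    Tendsto (fun T : ℝ => ∫ y in (-T)..T,
        (g ((a : ℂ) + 1 + Complex.I * y) - g ((a : ℂ) + Complex.I * y)) *
          Complex.exp (-Complex.cos (2 * Real.pi * ((a : ℂ) + Complex.I * y))))
      atTop (nhds 0) := by
  set f : ℂ → ℂ := fun z => g z * Complex.exp (-Complex.cos (2 * Real.pi * z)) with hf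
  have hfd : DifferentiableOn ℂ f U := by
    refine hg.mul (Differentiable.differentiableOn ?_)
    fun_prop
  have hper : ∀ z : ℂ, Complex.cos (2 * Real.pi * (z + 1)) = Complex.cos (2 * Real.pi * z) := by
    intro z
    rw [mul_add, mul_one, Complex.cos_add_two_pi]
  have hline : ∀ c : ℝ, a ≤ c → c ≤ a + 1 →
      Continuous (fun y : ℝ => f ((c : ℂ) + Complex.I * y)) := by
    intro c h1 h2
    refine hfd.continuousOn.comp_continuous (by fun_prop) ?_
    intro y
    apply hstrip
    simp [h1, h2]
  have hshift : ∀ h : ℂ, ∫ s in (0:ℝ)..1, f ((a : ℂ) + s + h) =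
      ∫ x in a..(a + 1), f (x + h) := by
    intro h
    have := intervalIntegral.integral_comp_add_left (a := 0) (b := 1)
      (fun x : ℝ => f ((x : ℂ) + h)) a
    simpa using this
  have key : ∀ T : ℝ, ∫ y in (-T)..T,
        (g ((a : ℂ) + 1 + Complex.I * y) - g ((a : ℂ) + Complex.I * y)) *
          Complex.exp (-Complex.cos (2 * Real.pi * ((a : ℂ) + Complex.I * y))) =
      -Complex.I * ((∫ s in (0:ℝ)..1, f ((a : ℂ) + s + Complex.I * T)) -
        ∫ s in (0:ℝ)..1, f ((a : ℂ) + s - Complex.I * T)) := by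
    intro T
    have e1 : ∀ y : ℝ, (g ((a : ℂ) + 1 + Complex.I * y) - g ((a : ℂ) + Complex.I * y)) *
          Complex.exp (-Complex.cos (2 * Real.pi * ((a : ℂ) + Complex.I * y))) =
        f (((a + 1 : ℝ) : ℂ) + Complex.I * y) - f ((a : ℂ) + Complex.I * y) := by
      intro y
      have h1 : ((a + 1 : ℝ) : ℂ) + Complex.I * y = ((a : ℂ) + Complex.I * y) + 1 := by
        push_cast; ring
      have h2 : (a : ℂ) + 1 + Complex.I * y = ((a : ℂ) + Complex.I * y) + 1 := by ring
      rw [h1, h2]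
      simp only [hf]
      rw [hper]
      ring
    simp_rw [e1, sub_eq_add_neg ((a : ℂ) + _) (Complex.I * (T : ℂ)), hshift]
    rw [intervalIntegral.integral_sub
      ((hline (a + 1) (by linarith) le_rfl).intervalIntegrable _ _)
      ((hline a le_rfl (by linarith)).intervalIntegrable _ _)]
    have hC := Complex.integral_boundary_rect_eq_zero_of_differentiableOn f
      (⟨a, -T⟩ : ℂ) (⟨a + 1, T⟩ : ℂ) (hfd.mono ?_)
    · simp only [smul_eq_mul, mul_comm _ Complex.I] at hC
      have h3 : Complex.I * ((-T : ℝ) : ℂ) = -(Complex.I * T) := by push_cast; ring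
      rw [h3] at hC
      linear_combination (-Complex.I) * hC + ((∫ y in (-T)..T, f (((a + 1 : ℝ) : ℂ) + Complex.I * y)) - ∫ y in (-T)..T, f ((a : ℂ) + Complex.I * y)) * Complex.I_mul_I
    · intro z hz
      apply hstrip
      have := hz.1
      simpa [Set.uIcc_of_le (show a ≤ a + 1 by linarith)] using this
  simp_rw [key]
  simpa using (htop.sub hbot).const_mul (-Complex.I)
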